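/- Let f ∈ S₀^ev, let L > 0, μ = e^L, and n ∈ ℤ. Then ∫_1^μ (Σ_μ(ℰf))(u) u^{−2πin/L} d*u = ζ(1/2 − 2πin/L) · ψ_f(2πn/L). -/

import Mathlib

/-!
Put `D(u) = ∑_{n ≥ 1} f(n u)`. Since `u ↦ u^{-2πin/L}` is invariant under `u ↦ μ u` and the
intervals `(μ^k, μ^{k+1}]` tile `(0, ∞)`, the integral over a period unfolds to the Mellin transform
of `D` at `s = 1/2 - 2πin/L`, and the claim becomes Müntz's formula
`∫_0^∞ D(u) u^{s-1} du = ζ(s) ∫_0^∞ f(u) u^{s-1} du`.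

For `1 < Re s` this is termwise integration. To reach `Re s = 1/2` one continues analytically, which
needs `D` to stay bounded as `u → 0`. Now `u D(u)` is a Riemann sum of mesh `u` for `∫_0^∞ f`, so it
differs from that integral by at most `u ∫_0^∞ |f'|`; as the integral vanishes, `|D| ≤ ∫_0^∞ |f'|`.
-/

open MeasureTheory Set

/-- `(ℰ f)(u) = u^{1/2} ∑_{n ≥ 1} f(n u)`. -/
noncomputable def Emap (f : ℝ → ℂ) (u : ℝ) : ℂ :=
  (u : ℂ) ^ ((1 : ℂ)/2) * ∑' n : ℕ, f ((n + 1) * u)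

/-- `(Σ_μ g)(u) = ∑_{k ∈ ℤ} g(μ^k u)`. -/
noncomputable def SigmaMu (μ : ℝ) (g : ℝ → ℂ) (u : ℝ) : ℂ :=
  ∑' k : ℤ, g (μ ^ k * u)

/-- `ψ_f(z) = ∫₀^∞ f(u) u^{1/2 - iz} du/u`. -/
noncomputable def psi (f : ℝ → ℂ) (z : ℂ) : ℂ :=
  ∫ u in Ioi (0:ℝ), f u * (u : ℂ) ^ ((1 : ℂ)/2 - Complex.I * z) / (u : ℂ)

open Filter Topology Asymptotics

/-- The sum `∑_{n ≥ 1} f(n u)` over the dilates of `f`, so that `ℰ f (u) = u^{1/2} dilationSum f u`.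
As in `Emap`, the summation index is shifted to start at `0`. -/
noncomputable def dilationSum {E : Type*} [AddCommMonoid E] [TopologicalSpace E]
    (f : ℝ → E) (u : ℝ) : E :=
  ∑' n : ℕ, f ((n + 1) * u)

section RiemannSum

variable {E : Type*} [NormedAddCommGroup E] [NormedSpace ℝ E] {f : ℝ → E}

lemma hasSum_setIntegral_Ioc_natCast_mul {g : ℝ → E} (hg : IntegrableOn g (Ioi 0)) {u : ℝ}
    (hu : 0 < u) :
    HasSum (fun n : ℕ => ∫ x in Ioc (n * u) ((n + 1) * u), g x) (∫ x in Ioi 0, g x) := by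
  have hmono : Monotone fun n : ℕ => (n : ℝ) * u := fun m n hmn => by
    dsimp only; gcongr
  have htop : Tendsto (fun n : ℕ => (n : ℝ) * u) atTop atTop :=
    tendsto_natCast_atTop_atTop.atTop_mul_const hu
  have hunion : ⋃ n : ℕ, Ioc (n * u) ((n + 1) * u) = Ioi 0 := by
    simpa using iUnion_Ioc_map_succ_eq_Ioi (fun n => hmono bot_le)
      (not_bddAbove_of_tendsto_atTop htop)
  rw [← hunion]
  refine hasSum_integral_iUnion (fun _ => measurableSet_Ioc) ?_ (hunion ▸ hg)
  simpa using hmono.pairwise_disjoint_on_Ioc_succ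

variable [CompleteSpace E]

lemma norm_smul_sub_setIntegral_Ioc_le {a b : ℝ} (hab : a ≤ b)
    (hdiff : ∀ x ∈ Ioc a b, DifferentiableAt ℝ f x) (hf : IntegrableOn f (Ioc a b))
    (hderiv : IntegrableOn (deriv f) (Ioc a b)) :
    ‖(b - a) • f b - ∫ x in Ioc a b, f x‖ ≤ (b - a) * ∫ x in Ioc a b, ‖deriv f x‖ := by
  have hosc : ∀ x ∈ Ioc a b, ‖f b - f x‖ ≤ ∫ t in Ioc a b, ‖deriv f t‖ := fun x hx => by
    have hsub : Ioc x b ⊆ Ioc a b := Ioc_subset_Ioc_left hx.1.le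
    have hftc : ∫ t in x..b, deriv f t = f b - f x := by
      refine intervalIntegral.integral_deriv_eq_sub (fun t ht => hdiff t ?_)
        ((intervalIntegrable_iff_integrableOn_Ioc_of_le hx.2).2 (hderiv.mono_set hsub))
      rw [uIcc_of_le hx.2] at ht
      exact ⟨hx.1.trans_le ht.1, ht.2⟩
    rw [← hftc, intervalIntegral.integral_of_le hx.2]
    exact (norm_integral_le_integral_norm _).trans
      (setIntegral_mono_set hderiv.norm (.of_forall fun _ => norm_nonneg _) hsub.eventuallyLE)
  have hsplit : (b - a) • f b - ∫ x in Ioc a b, f x = ∫ x in Ioc a b, (f b - f x) := by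
    have hconst : IntegrableOn (fun _ => f b) (Ioc a b) := integrable_const _
    rw [integral_sub hconst hf, setIntegral_const, Real.volume_real_Ioc_of_le hab]
  rw [hsplit, mul_comm]
  simpa only [Real.volume_real_Ioc_of_le hab] using
    norm_setIntegral_le_of_norm_le_const (μ := volume) measure_Ioc_lt_top hosc

theorem norm_smul_dilationSum_sub_integral_le (hdiff : DifferentiableOn ℝ f (Ioi 0))
    (hf : IntegrableOn f (Ioi 0)) (hderiv : IntegrableOn (deriv f) (Ioi 0)) {u : ℝ} (hu : 0 < u) :
    ‖u • dilationSum f u - ∫ x in Ioi 0, f x‖ ≤ u * ∫ x in Ioi 0, ‖deriv f x‖ := by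
  let cell (n : ℕ) : Set ℝ := Ioc (n * u) ((n + 1) * u)
  let err (n : ℕ) : E := u • f ((n + 1) * u) - ∫ x in cell n, f x
  have hcell : ∀ n, cell n ⊆ Ioi 0 := fun n x hx => lt_of_le_of_lt (by positivity) hx.1
  have herr : ∀ n, ‖err n‖ ≤ u * ∫ x in cell n, ‖deriv f x‖ := fun n => by
    have h := norm_smul_sub_setIntegral_Ioc_le (a := n * u) (b := (n + 1) * u) (by linarith)
      (fun x hx => hdiff.differentiableAt (Ioi_mem_nhds (hcell n hx)))
      (hf.mono_set (hcell n)) (hderiv.mono_set (hcell n))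
    rwa [show (n + 1) * u - n * u = u by ring] at h
  have hbound := (hasSum_setIntegral_Ioc_natCast_mul hderiv.norm hu).mul_left u
  have hsum := (Summable.of_norm_bounded hbound.summable herr).hasSum.add
    (hasSum_setIntegral_Ioc_natCast_mul hf hu)
  simp only [err, cell, sub_add_cancel] at hsum
  rw [dilationSum, ← tsum_const_smul'', hsum.tsum_eq, add_sub_cancel_right]
  exact tsum_of_norm_bounded hbound herr

lemma norm_dilationSum_le_integral_norm_deriv (hdiff : DifferentiableOn ℝ f (Ioi 0))
    (hf : IntegrableOn f (Ioi 0)) (hderiv : IntegrableOn (deriv f) (Ioi 0))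
    (hint : ∫ x in Ioi 0, f x = 0) {u : ℝ} (hu : 0 < u) :
    ‖dilationSum f u‖ ≤ ∫ x in Ioi 0, ‖deriv f x‖ := by
  have h := norm_smul_dilationSum_sub_integral_le hdiff hf hderiv hu
  rw [hint, sub_zero, norm_smul, Real.norm_of_nonneg hu.le] at h
  exact le_of_mul_le_mul_left h hu

end RiemannSum

section Decay

variable {E : Type*} [NormedAddCommGroup E] {f : ℝ → E} {a B C : ℝ}

lemma norm_le_integral_norm_deriv [NormedSpace ℝ E] [CompleteSpace E] {c : ℝ}
    (hdiff : DifferentiableOn ℝ f (Ioi c)) (hderiv : IntegrableOn (deriv f) (Ioi c))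
    (hlim : Tendsto f atTop (𝓝 0)) {x : ℝ} (hx : c < x) :
    ‖f x‖ ≤ ∫ t in Ioi c, ‖deriv f t‖ := by
  have hsub : Ioi x ⊆ Ioi c := Ioi_subset_Ioi hx.le
  have hftc : ∫ t in Ioi x, deriv f t = 0 - f x :=
    integral_Ioi_of_hasDerivAt_of_tendsto'
      (fun t ht => (hdiff.differentiableAt (Ioi_mem_nhds (hx.trans_le ht))).hasDerivAt)
      (hderiv.mono_set hsub) hlim
  rw [← norm_neg, ← zero_sub, ← hftc]
  exact (norm_integral_le_integral_norm _).trans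
    (setIntegral_mono_set hderiv.norm (.of_forall fun _ => norm_nonneg _) hsub.eventuallyLE)

lemma exists_norm_le_mul_rpow_neg (ha : 0 ≤ a) (hB : ∀ x > 0, ‖f x‖ ≤ B)
    (htop : f =O[atTop] (· ^ (-a))) : ∃ C, ∀ x > 0, ‖f x‖ ≤ C * x ^ (-a) := by
  obtain ⟨K, hK⟩ := htop.bound
  obtain ⟨X, hX⟩ := eventually_atTop.1 hK
  refine ⟨max K (B * X ^ a), fun x hx => ?_⟩
  have hxa : 0 < x ^ (-a) := Real.rpow_pos_of_pos hx _
  have hB0 : 0 ≤ B := (norm_nonneg _).trans (hB x hx)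
  rcases le_total X x with h | h
  · calc ‖f x‖ ≤ K * x ^ (-a) := by simpa only [Real.norm_of_nonneg hxa.le] using hX x h
      _ ≤ _ := by gcongr; exact le_max_left _ _
  · calc ‖f x‖ ≤ B * (x ^ a * x ^ (-a)) := by
          rw [← Real.rpow_add hx, add_neg_cancel, Real.rpow_zero, mul_one]; exact hB x hx
      _ ≤ B * (X ^ a * x ^ (-a)) := by gcongr
      _ = B * X ^ a * x ^ (-a) := (mul_assoc _ _ _).symm
      _ ≤ _ := by gcongr; exact le_max_right _ _

lemma summable_natCast_add_one_rpow_neg (ha : 1 < a) :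
    Summable fun n : ℕ => ((n : ℝ) + 1) ^ (-a) := by
  simpa using (summable_nat_add_iff 1).2 (Real.summable_nat_rpow.2 (neg_lt_neg ha))

lemma norm_comp_natCast_add_one_mul_le (hC : ∀ x > 0, ‖f x‖ ≤ C * x ^ (-a)) {u : ℝ} (hu : 0 < u)
    (n : ℕ) : ‖f ((n + 1) * u)‖ ≤ C * u ^ (-a) * ((n : ℝ) + 1) ^ (-a) := by
  have h := hC ((n + 1) * u) (by positivity)
  rwa [Real.mul_rpow (by positivity) hu.le, mul_comm (_ ^ _), ← mul_assoc] at h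

lemma dilationSum_isBigO_atTop (ha : 1 < a) (hC : ∀ x > 0, ‖f x‖ ≤ C * x ^ (-a)) :
    dilationSum f =O[atTop] (· ^ (-a)) := by
  refine .of_bound (C * ∑' n : ℕ, ((n : ℝ) + 1) ^ (-a)) ?_
  filter_upwards [eventually_gt_atTop 0] with u hu
  rw [Real.norm_of_nonneg (by positivity), mul_right_comm]
  exact tsum_of_norm_bounded ((summable_natCast_add_one_rpow_neg ha).hasSum.mul_left _)
    (norm_comp_natCast_add_one_mul_le hC hu)

lemma continuousOn_dilationSum [CompleteSpace E] (ha : 1 < a) (hf : ContinuousOn f (Ioi 0))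
    (hC : ∀ x > 0, ‖f x‖ ≤ C * x ^ (-a)) : ContinuousOn (dilationSum f) (Ioi 0) := by
  have hC0 : 0 ≤ C := by simpa using (norm_nonneg _).trans (hC 1 one_pos)
  have htail : ∀ c > 0, ContinuousOn (dilationSum f) (Ioi c) := fun c hc => by
    refine continuousOn_tsum (u := fun n : ℕ => C * c ^ (-a) * ((n : ℝ) + 1) ^ (-a))
      (fun n => ?_) ((summable_natCast_add_one_rpow_neg ha).mul_left _) fun n u hu => ?_
    · exact hf.comp (by fun_prop) fun u hu => mul_pos n.cast_add_one_pos (hc.trans hu)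
    · refine (norm_comp_natCast_add_one_mul_le hC (hc.trans hu) n).trans ?_
      gcongr ?_ * _
      gcongr C * ?_
      exact Real.rpow_le_rpow_of_nonpos hc (le_of_lt hu) (by linarith)
  intro x hx
  exact ((htail (x / 2) (half_pos hx)).continuousAt
    (Ioi_mem_nhds (half_lt_self hx))).continuousWithinAt

end Decay

section Mellin

variable {E : Type*} [NormedAddCommGroup E] {f : ℝ → E} {a B : ℝ} {s : ℂ}

lemma isBigO_rpow_neg_zero_of_forall_norm_le (hB : ∀ x > 0, ‖f x‖ ≤ B) :
    f =O[𝓝[>] 0] (· ^ (-0 : ℝ)) := by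
  refine .of_bound B ?_
  filter_upwards [self_mem_nhdsWithin] with x hx
  simpa using hB x hx

variable [NormedSpace ℂ E]

lemma mellinConvergent_of_forall_norm_le (hloc : LocallyIntegrableOn f (Ioi 0))
    (hB : ∀ x > 0, ‖f x‖ ≤ B) (htop : f =O[atTop] (· ^ (-a))) (hs0 : 0 < s.re) (hsa : s.re < a) :
    MellinConvergent f s :=
  mellinConvergent_of_isBigO_rpow hloc htop hsa (isBigO_rpow_neg_zero_of_forall_norm_le hB) hs0

lemma differentiableAt_mellin_of_forall_norm_le (hloc : LocallyIntegrableOn f (Ioi 0))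
    (hB : ∀ x > 0, ‖f x‖ ≤ B) (htop : f =O[atTop] (· ^ (-a))) (hs0 : 0 < s.re) (hsa : s.re < a) :
    DifferentiableAt ℂ (mellin f) s :=
  mellin_differentiableAt_of_isBigO_rpow hloc htop hsa
    (isBigO_rpow_neg_zero_of_forall_norm_le hB) hs0

lemma integral_norm_cpow_smul_comp_mul_left (f : ℝ → E) (s : ℂ) {c : ℝ} (hc : 0 < c) :
    ∫ t in Ioi (0 : ℝ), ‖(t : ℂ) ^ (s - 1) • f (c * t)‖
      = c ^ (-s.re) * ∫ t in Ioi (0 : ℝ), ‖(t : ℂ) ^ (s - 1) • f t‖ := by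
  have hscale : ∀ t ∈ Ioi (0 : ℝ), ‖(t : ℂ) ^ (s - 1) • f (c * t)‖
      = c ^ (1 - s.re) * ‖((c * t : ℝ) : ℂ) ^ (s - 1) • f (c * t)‖ := fun t ht => by
    rw [norm_smul, norm_smul, Complex.norm_cpow_eq_rpow_re_of_pos ht,
      Complex.norm_cpow_eq_rpow_re_of_pos (mul_pos hc ht), Real.mul_rpow hc.le (le_of_lt ht),
      ← mul_assoc, ← mul_assoc, ← Real.rpow_add hc]
    simp
  rw [setIntegral_congr_fun measurableSet_Ioi hscale, integral_const_mul,
    integral_comp_mul_left_Ioi (fun t : ℝ => ‖(t : ℂ) ^ (s - 1) • f t‖) 0 hc, mul_zero,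
    smul_eq_mul, ← mul_assoc, ← Real.rpow_neg_one, ← Real.rpow_add hc]
  ring_nf

theorem mellin_dilationSum_of_one_lt_re [CompleteSpace E] (hf : MellinConvergent f s)
    (hs : 1 < s.re) : mellin (dilationSum f) s = riemannZeta s • mellin f s := by
  have hpos : ∀ n : ℕ, (0 : ℝ) < n + 1 := fun n => n.cast_add_one_pos
  have hterm : ∀ n : ℕ, MellinConvergent (fun t => f ((n + 1) * t)) s := fun n =>
    (MellinConvergent.comp_mul_left (hpos n)).2 hf
  have hnorm : Summable fun n : ℕ =>
      ∫ t in Ioi (0 : ℝ), ‖(t : ℂ) ^ (s - 1) • f ((n + 1) * t)‖ := by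
    simp_rw [fun n : ℕ => integral_norm_cpow_smul_comp_mul_left f s (hpos n)]
    exact (summable_natCast_add_one_rpow_neg hs).mul_right _
  calc mellin (dilationSum f) s
      = ∫ t in Ioi (0 : ℝ), ∑' n : ℕ, (t : ℂ) ^ (s - 1) • f ((n + 1) * t) := by
        simp only [mellin, dilationSum, tsum_const_smul'']
    _ = ∑' n : ℕ, mellin (fun t => f ((n + 1) * t)) s :=
        (integral_tsum_of_summable_integral_norm hterm hnorm).symm
    _ = ∑' n : ℕ, (1 / ((n : ℂ) + 1) ^ s) • mellin f s := by
        refine tsum_congr fun n => ?_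
        rw [mellin_comp_mul_left f s (hpos n), Complex.cpow_neg, one_div]
        push_cast
        rfl
    _ = riemannZeta s • mellin f s := by
        have hzeta := (summable_nat_add_iff 1).2 (Complex.summable_one_div_nat_cpow.2 hs)
        push_cast at hzeta
        rw [zeta_eq_tsum_one_div_nat_add_one_cpow hs, hzeta.tsum_smul_const]

end Mellin

section Continuation

variable {E : Type*} [NormedAddCommGroup E] [NormedSpace ℂ E] [CompleteSpace E]

lemma differentiable_update_sub_one_mul_riemannZeta :
    Differentiable ℂ (Function.update (fun s => (s - 1) * riemannZeta s) 1 1) := by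
  simpa [DirichletCharacter.LFunctionTrivChar₁, DirichletCharacter.LFunctionTrivChar] using
    DirichletCharacter.differentiable_LFunctionTrivChar₁ 1

lemma eqOn_riemannZeta_smul_of_frequently_eq {F M : ℂ → E} {U : Set ℂ} (hUo : IsOpen U)
    (hUc : IsPreconnected U) (hF : DifferentiableOn ℂ F U) (hM : DifferentiableOn ℂ M U) {z₀ : ℂ}
    (hz₀ : z₀ ∈ U) (h : ∃ᶠ z in 𝓝[≠] z₀, F z = riemannZeta z • M z) :
    EqOn F (fun z => riemannZeta z • M z) (U \ {1}) := by
  have hl : DifferentiableOn ℂ (fun z => (z - 1) • F z) U := by fun_prop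
  have hr : DifferentiableOn ℂ
      (fun z => Function.update (fun s => (s - 1) * riemannZeta s) 1 1 z • M z) U :=
    differentiable_update_sub_one_mul_riemannZeta.differentiableOn.smul hM
  have hfreq : ∃ᶠ z in 𝓝[≠] z₀,
      (z - 1) • F z = Function.update (fun s => (s - 1) * riemannZeta s) 1 1 z • M z := by
    have hne : ∀ᶠ z in 𝓝[≠] z₀, z ≠ 1 :=
      nhdsNE_le_cofinite z₀ (finite_singleton 1).compl_mem_cofinite
    refine (h.and_eventually hne).mono fun z hz => ?_
    rw [Function.update_of_ne hz.2, hz.1, mul_smul]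
  intro z hz
  have hmul := (hl.analyticOnNhd hUo).eqOn_of_preconnected_of_frequently_eq
    (hr.analyticOnNhd hUo) hUc hz₀ hfreq hz.1
  simp only [Function.update_of_ne hz.2, mul_smul] at hmul
  exact smul_right_injective E (sub_ne_zero.2 hz.2) hmul

end Continuation

section Muntz

variable {E : Type*} [NormedAddCommGroup E] [NormedSpace ℂ E] {f : ℝ → E} {a : ℝ} {s : ℂ}

/-- The functions on `(0, ∞)` for which Müntz's formula is proved: those with integrable derivative
and decay of order `a > 1` at infinity. The value of `f` at `0` and on `(-∞, 0)` is irrelevant. -/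
structure IsMuntzAdmissible (f : ℝ → E) (a : ℝ) : Prop where
  one_lt : 1 < a
  differentiableOn : DifferentiableOn ℝ f (Ioi 0)
  integrableOn_deriv : IntegrableOn (deriv f) (Ioi 0)
  isBigO_atTop : f =O[atTop] (· ^ (-a))

lemma isMuntzAdmissible_schwartzMap (f : SchwartzMap ℝ E) (ha : 1 < a) :
    IsMuntzAdmissible f a where
  one_lt := ha
  differentiableOn := f.differentiable.differentiableOn
  integrableOn_deriv := (SchwartzMap.derivCLM ℝ E f).integrable.integrableOn
  isBigO_atTop := by
    refine ((f.isBigO_cocompact_rpow (-a)).mono atTop_le_cocompact).congr' .rfl ?_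
    filter_upwards [eventually_gt_atTop 0] with x hx
    rw [Real.norm_of_nonneg hx.le]

namespace IsMuntzAdmissible

lemma locallyIntegrableOn (hf : IsMuntzAdmissible f a) : LocallyIntegrableOn f (Ioi 0) :=
  hf.differentiableOn.continuousOn.locallyIntegrableOn measurableSet_Ioi

variable [CompleteSpace E]

lemma norm_le (hf : IsMuntzAdmissible f a) {x : ℝ} (hx : 0 < x) :
    ‖f x‖ ≤ ∫ t in Ioi 0, ‖deriv f t‖ :=
  norm_le_integral_norm_deriv hf.differentiableOn hf.integrableOn_deriv
    (hf.isBigO_atTop.trans_tendsto (tendsto_rpow_neg_atTop (one_pos.trans hf.one_lt))) hx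

lemma mellinConvergent (hf : IsMuntzAdmissible f a) (hs0 : 0 < s.re) (hsa : s.re < a) :
    MellinConvergent f s :=
  mellinConvergent_of_forall_norm_le hf.locallyIntegrableOn (fun _ => hf.norm_le)
    hf.isBigO_atTop hs0 hsa

lemma integrableOn (hf : IsMuntzAdmissible f a) : IntegrableOn f (Ioi 0) := by
  simpa [MellinConvergent] using hf.mellinConvergent (s := 1) (by simp) (by simpa using hf.one_lt)

lemma exists_norm_le_mul_rpow_neg (hf : IsMuntzAdmissible f a) :
    ∃ C, ∀ x > 0, ‖f x‖ ≤ C * x ^ (-a) :=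
  _root_.exists_norm_le_mul_rpow_neg (one_pos.trans hf.one_lt).le (fun _ => hf.norm_le)
    hf.isBigO_atTop

lemma dilationSum_isBigO_atTop (hf : IsMuntzAdmissible f a) :
    dilationSum f =O[atTop] (· ^ (-a)) :=
  hf.exists_norm_le_mul_rpow_neg.elim fun _ hC => _root_.dilationSum_isBigO_atTop hf.one_lt hC

lemma locallyIntegrableOn_dilationSum (hf : IsMuntzAdmissible f a) :
    LocallyIntegrableOn (dilationSum f) (Ioi 0) :=
  hf.exists_norm_le_mul_rpow_neg.elim fun _ hC =>
    (continuousOn_dilationSum hf.one_lt hf.differentiableOn.continuousOn hC).locallyIntegrableOn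
      measurableSet_Ioi

lemma norm_dilationSum_le (hf : IsMuntzAdmissible f a) (hint : ∫ x in Ioi 0, f x = 0)
    {u : ℝ} (hu : 0 < u) : ‖dilationSum f u‖ ≤ ∫ x in Ioi 0, ‖deriv f x‖ :=
  norm_dilationSum_le_integral_norm_deriv hf.differentiableOn hf.integrableOn
    hf.integrableOn_deriv hint hu

lemma mellinConvergent_dilationSum (hf : IsMuntzAdmissible f a) (hint : ∫ x in Ioi 0, f x = 0)
    (hs0 : 0 < s.re) (hsa : s.re < a) : MellinConvergent (dilationSum f) s :=
  mellinConvergent_of_forall_norm_le hf.locallyIntegrableOn_dilationSum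
    (fun _ => hf.norm_dilationSum_le hint) hf.dilationSum_isBigO_atTop hs0 hsa

theorem mellin_dilationSum (hf : IsMuntzAdmissible f a) (hint : ∫ x in Ioi 0, f x = 0)
    (hs0 : 0 < s.re) (hsa : s.re < a) (hs1 : s ≠ 1) :
    mellin (dilationSum f) s = riemannZeta s • mellin f s := by
  let U : Set ℂ := {z | 0 < z.re} ∩ {z | z.re < a}
  have hUo : IsOpen U := (isOpen_lt continuous_const Complex.continuous_re).inter
    (isOpen_lt Complex.continuous_re continuous_const)
  have hUc : IsPreconnected U :=
    ((convex_halfSpace_re_gt 0).inter (convex_halfSpace_re_lt a)).isPreconnected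
  have hD : DifferentiableOn ℂ (mellin (dilationSum f)) U := fun z hz =>
    (differentiableAt_mellin_of_forall_norm_le hf.locallyIntegrableOn_dilationSum
      (fun _ => hf.norm_dilationSum_le hint) hf.dilationSum_isBigO_atTop
      hz.1 hz.2).differentiableWithinAt
  have hM : DifferentiableOn ℂ (mellin f) U := fun z hz =>
    (differentiableAt_mellin_of_forall_norm_le hf.locallyIntegrableOn (fun _ => hf.norm_le)
      hf.isBigO_atTop hz.1 hz.2).differentiableWithinAt
  obtain ⟨b, hb1, hba⟩ := exists_between hf.one_lt
  have hbU : (b : ℂ) ∈ U := ⟨one_pos.trans hb1, hba⟩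
  have heq : ∀ᶠ z in 𝓝 (b : ℂ), mellin (dilationSum f) z = riemannZeta z • mellin f z := by
    filter_upwards [hUo.mem_nhds hbU,
      (isOpen_lt continuous_const Complex.continuous_re).mem_nhds hb1] with z hzU hz1
    exact mellin_dilationSum_of_one_lt_re (hf.mellinConvergent hzU.1 hzU.2) hz1
  exact eqOn_riemannZeta_smul_of_frequently_eq hUo hUc hD hM hbU
    (heq.filter_mono nhdsWithin_le_nhds).frequently ⟨⟨hs0, hsa⟩, hs1⟩

end IsMuntzAdmissible

end Muntz

section Unfolding

variable {E : Type*} [NormedAddCommGroup E] [NormedSpace ℝ E] {μ : ℝ}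

lemma iUnion_Ioc_zpow (hμ : 1 < μ) : ⋃ k : ℤ, Ioc (μ ^ k) (μ ^ (k + 1)) = Ioi 0 := by
  ext x
  simp only [mem_iUnion, mem_Ioi]
  exact ⟨fun ⟨k, hk⟩ => (zpow_pos (one_pos.trans hμ) k).trans hk.1,
    fun hx => exists_mem_Ioc_zpow hx hμ⟩

lemma setIntegral_Ioc_zpow (hμ : 1 < μ) (h : ℝ → E) (k : ℤ) :
    ∫ u in Ioc (μ ^ k) (μ ^ (k + 1)), h u = ∫ u in Ioc 1 μ, μ ^ k • h (μ ^ k * u) := by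
  rw [integral_smul, ← intervalIntegral.integral_of_le hμ.le,
    intervalIntegral.smul_integral_comp_mul_left, mul_one, ← zpow_add_one₀ (by positivity),
    intervalIntegral.integral_of_le (zpow_le_zpow_right₀ hμ.le (by lia))]

lemma hasSum_setIntegral_zpow_smul (hμ : 1 < μ) {h : ℝ → E} (hh : IntegrableOn h (Ioi 0)) :
    HasSum (fun k : ℤ => ∫ u in Ioc 1 μ, μ ^ k • h (μ ^ k * u)) (∫ u in Ioi 0, h u) := by
  simp_rw [← setIntegral_Ioc_zpow hμ]
  rw [← iUnion_Ioc_zpow hμ] at hh ⊢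
  exact hasSum_integral_iUnion (fun _ => measurableSet_Ioc)
    (zpow_right_strictMono₀ hμ).monotone.pairwise_disjoint_on_Ioc_succ hh

theorem integral_Ioc_tsum_zpow_smul [CompleteSpace E] (hμ : 1 < μ) {h : ℝ → E}
    (hh : IntegrableOn h (Ioi 0)) :
    ∫ u in Ioc 1 μ, ∑' k : ℤ, μ ^ k • h (μ ^ k * u) = ∫ u in Ioi 0, h u := by
  have hpos : ∀ k : ℤ, 0 < μ ^ k := zpow_pos (one_pos.trans hμ)
  have hint : ∀ k : ℤ, IntegrableOn (fun u => μ ^ k • h (μ ^ k * u)) (Ioc 1 μ) := fun k =>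
    (((integrableOn_Ioi_comp_mul_left_iff h 0 (hpos k)).2 (by rwa [mul_zero])).mono_set
      fun u hu => one_pos.trans hu.1).smul _
  have hnorm : Summable fun k : ℤ => ∫ u in Ioc 1 μ, ‖μ ^ k • h (μ ^ k * u)‖ := by
    simpa only [norm_smul, Real.norm_of_nonneg (hpos _).le, smul_eq_mul] using
      (hasSum_setIntegral_zpow_smul hμ hh.norm).summable
  rw [← integral_tsum_of_summable_integral_norm hint hnorm,
    (hasSum_setIntegral_zpow_smul hμ hh).tsum_eq]

lemma integral_Ioc_SigmaMu_div (hμ : 1 < μ) {g : ℝ → ℂ}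
    (hg : IntegrableOn (fun u => g u / u) (Ioi 0)) :
    ∫ u in Ioc 1 μ, SigmaMu μ g u / u = ∫ u in Ioi (0 : ℝ), g u / u := by
  rw [← integral_Ioc_tsum_zpow_smul hμ hg]
  refine setIntegral_congr_fun measurableSet_Ioc fun u _ => ?_
  rw [SigmaMu, ← tsum_div_const]
  refine tsum_congr fun k => ?_
  have hk : (μ : ℂ) ^ k ≠ 0 := zpow_ne_zero k (mod_cast (one_pos.trans hμ).ne')
  rw [Complex.real_smul]
  push_cast
  field_simp

lemma SigmaMu_mul_of_forall_comp_zpow_mul_eq {u : ℝ} {χ : ℝ → ℂ}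
    (hχ : ∀ k : ℤ, χ (μ ^ k * u) = χ u) (g : ℝ → ℂ) :
    SigmaMu μ g u * χ u = SigmaMu μ (fun v => g v * χ v) u := by
  simp only [SigmaMu, hχ, tsum_mul_right]

lemma zpow_mul_cpow_of_cpow_eq_one {u : ℝ} (hμ : 0 < μ) (hu : 0 < u) {w : ℂ}
    (hw : (μ : ℂ) ^ w = 1) (k : ℤ) : ((μ ^ k * u : ℝ) : ℂ) ^ w = (u : ℂ) ^ w := by
  have hlog : Complex.log ((μ ^ k : ℝ) : ℂ) = k * Complex.log μ := by
    rw [← Complex.ofReal_log (zpow_pos hμ k).le, Real.log_zpow, Complex.ofReal_mul,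
      Complex.ofReal_log hμ.le, Complex.ofReal_intCast]
  have hμk : ((μ ^ k : ℝ) : ℂ) ^ w = 1 := by
    rw [Complex.cpow_def_of_ne_zero (mod_cast (zpow_pos hμ k).ne'), hlog, mul_assoc,
      Complex.exp_int_mul, ← Complex.cpow_def_of_ne_zero (mod_cast hμ.ne'), hw, one_zpow]
  rw [Complex.ofReal_mul, Complex.mul_cpow_ofReal_nonneg (zpow_pos hμ k).le hu.le, hμk, one_mul]

lemma Emap_mul_cpow_div (f : ℝ → ℂ) (w : ℂ) {u : ℝ} (hu : 0 < u) :
    Emap f u * (u : ℂ) ^ w / u = (u : ℂ) ^ (1 / 2 + w - 1) • dilationSum f u := by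
  have hu' : (u : ℂ) ≠ 0 := mod_cast hu.ne'
  rw [Emap, ← dilationSum, Complex.cpow_sub _ _ hu', Complex.cpow_add _ _ hu', Complex.cpow_one,
    smul_eq_mul]
  ring

theorem integral_Ioc_SigmaMu_Emap {f : ℝ → ℂ} {w : ℂ} (hμ : 1 < μ)
    (hw : (μ : ℂ) ^ w = 1) (hf : MellinConvergent (dilationSum f) (1 / 2 + w)) :
    ∫ u in Ioc 1 μ, SigmaMu μ (Emap f) u * (u : ℂ) ^ w / u
      = mellin (dilationSum f) (1 / 2 + w) := by
  have htwist : ∀ u ∈ Ioc 1 μ, SigmaMu μ (Emap f) u * (u : ℂ) ^ w / u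
      = SigmaMu μ (fun v => Emap f v * (v : ℂ) ^ w) u / u := fun u hu => by
    rw [SigmaMu_mul_of_forall_comp_zpow_mul_eq (χ := fun v => (v : ℂ) ^ w) fun k =>
      zpow_mul_cpow_of_cpow_eq_one (one_pos.trans hμ) (one_pos.trans hu.1) hw k]
  have hkernel : EqOn (fun u : ℝ => Emap f u * (u : ℂ) ^ w / u)
      (fun u => (u : ℂ) ^ (1 / 2 + w - 1) • dilationSum f u) (Ioi 0) := fun u hu =>
    Emap_mul_cpow_div f w hu
  rw [setIntegral_congr_fun measurableSet_Ioc htwist,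
    integral_Ioc_SigmaMu_div hμ ((integrableOn_congr_fun hkernel measurableSet_Ioi).2 hf)]
  exact setIntegral_congr_fun measurableSet_Ioi hkernel

end Unfolding

lemma psi_eq_mellin (f : ℝ → ℂ) (z : ℂ) : psi f z = mellin f (1 / 2 - Complex.I * z) := by
  refine setIntegral_congr_fun measurableSet_Ioi fun u hu => ?_
  have hu' : (u : ℂ) ≠ 0 := mod_cast (ne_of_gt hu)
  rw [Complex.cpow_sub _ 1 hu', Complex.cpow_one, smul_eq_mul]
  ring

lemma integral_eq_two_smul_setIntegral_Ioi_of_even {E : Type*} [NormedAddCommGroup E]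
    [NormedSpace ℝ E] {f : ℝ → E} (hf : Integrable f) (hev : ∀ x, f (-x) = f x) :
    ∫ x, f x = (2 : ℝ) • ∫ x in Ioi 0, f x := by
  have hrefl : ∫ x in Iic 0, f x = ∫ x in Ioi 0, f x := by
    simpa only [hev, neg_zero] using integral_comp_neg_Iic 0 f
  rw [← intervalIntegral.integral_Iic_add_Ioi hf.integrableOn hf.integrableOn, hrefl, two_smul]

lemma ofReal_exp_cpow_neg_two_pi_I_mul_div {L : ℝ} (hL : L ≠ 0) (n : ℤ) :
    ((Real.exp L : ℝ) : ℂ) ^ (-(2 * (Real.pi : ℂ) * Complex.I * (n : ℂ) / (L : ℂ))) = 1 := by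
  have hL' : (L : ℂ) ≠ 0 := mod_cast hL
  rw [Complex.ofReal_exp, Complex.cpow_def_of_ne_zero (Complex.exp_ne_zero _),
    ← Complex.ofReal_exp, ← Complex.ofReal_log (Real.exp_pos L).le, Real.log_exp,
    Complex.exp_eq_one_iff]
  exact ⟨-n, by push_cast; field_simp⟩

theorem stmt17_general {f : ℝ → ℂ} {a : ℝ} (hf : IsMuntzAdmissible f a)
    (hint : ∫ x in Ioi 0, f x = 0) (L : ℝ) (hL : 0 < L) (μ : ℝ) (hμ : μ = Real.exp L) (n : ℤ) :
    ∫ u in Ioc (1 : ℝ) μ,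
        SigmaMu μ (Emap f) u *
          (u : ℂ) ^ (-(2 * (Real.pi : ℂ) * Complex.I * (n : ℂ) / (L : ℂ))) / (u : ℂ)
      = riemannZeta (1 / 2 - 2 * (Real.pi : ℂ) * Complex.I * (n : ℂ) / (L : ℂ)) *
        psi f ((2 * Real.pi * (n : ℝ) / L : ℝ) : ℂ) := by
  set z : ℝ := 2 * Real.pi * n / L with hz
  have hw : 2 * (Real.pi : ℂ) * Complex.I * n / L = Complex.I * z := by rw [hz]; push_cast; ring
  have hperiod : (μ : ℂ) ^ (-(Complex.I * z)) = 1 := by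
    rw [hμ, ← hw, ofReal_exp_cpow_neg_two_pi_I_mul_div hL.ne']
  have hre : (1 / 2 - Complex.I * z).re = 1 / 2 := by simp
  have hre0 : 0 < (1 / 2 - Complex.I * z).re := by rw [hre]; norm_num
  have hrea : (1 / 2 - Complex.I * z).re < a := by linarith [hf.one_lt]
  have hne1 : 1 / 2 - Complex.I * z ≠ 1 := fun h => by norm_num [h] at hre
  rw [hw, integral_Ioc_SigmaMu_Emap (hμ ▸ Real.one_lt_exp_iff.2 hL) hperiod, ← sub_eq_add_neg,
    hf.mellin_dilationSum hint hre0 hrea hne1, psi_eq_mellin, smul_eq_mul]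
  rw [← sub_eq_add_neg]
  exact hf.mellinConvergent_dilationSum hint hre0 hrea

theorem stmt17 (f : SchwartzMap ℝ ℂ) (hev : ∀ x : ℝ, f (-x) = f x)
    (h0 : f 0 = 0) (hint : ∫ x : ℝ, f x = 0)
    (L : ℝ) (hL : 0 < L) (μ : ℝ) (hμ : μ = Real.exp L) (n : ℤ) :
    ∫ u in Ioc (1:ℝ) μ,
        SigmaMu μ (Emap (⇑f)) u *
          (u : ℂ) ^ (-(2 * (Real.pi : ℂ) * Complex.I * (n : ℂ) / (L : ℂ))) / (u : ℂ)
      = riemannZeta (1/2 - 2 * (Real.pi : ℂ) * Complex.I * (n : ℂ) / (L : ℂ)) *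
        psi (⇑f) ((2 * Real.pi * (n : ℝ) / L : ℝ) : ℂ) := by
  rw [integral_eq_two_smul_setIntegral_Ioi_of_even f.integrable hev] at hint
  exact stmt17_general (isMuntzAdmissible_schwartzMap f one_lt_two)
    ((smul_eq_zero_iff_right two_ne_zero).1 hint) L hL μ hμ n
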